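/- arXiv:2311.09964 — 2 statements merged into one kernel-verified Lean document; each statement's English description precedes it below -/
import Mathlib

section
/- (Sup-norm Morrey bound via Choquet integrals) Let $n\ge2$, $\delta\in(0,n]$, and $p\in(\delta,\infty)$. There is a constant $c=c(\delta,n,p)$ such that for every $u\in C^1(\mathbb{R}^n)$, $\sup_{x\in\mathbb{R}^n}|u(x)| \le c\Big[\Big(\int_{\mathbb{R}^n}|u(y)|^p\,d\mathcal{H}^{\delta}_\infty\Big)^{1/p} + \Big(\int_{\mathbb{R}^n}|\nabla u(y)|^p\,d\mathcal{H}^{\delta}_\infty\Big)^{1/p}\Big]$. -/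
open MeasureTheory Metric Set ENNReal

/-- δ-dimensional Hausdorff content via countable ball coverings. -/
noncomputable def hc (n : ℕ) (δ : ℝ) (E : Set (EuclideanSpace ℝ (Fin n))) : ℝ≥0∞ :=
  ⨅ (c : ℕ → EuclideanSpace ℝ (Fin n)) (r : ℕ → ℝ) (_ : ∀ i, 0 < r i)
    (_ : E ⊆ ⋃ i, ball (c i) (r i)), ∑' i, ENNReal.ofReal (r i ^ δ)

/-- Choquet integral of a nonnegative function over Ω with respect to `hc n δ`. -/
noncomputable def choquet (n : ℕ) (δ : ℝ) (Ω : Set (EuclideanSpace ℝ (Fin n)))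
    (f : EuclideanSpace ℝ (Fin n) → ℝ≥0∞) : ℝ≥0∞ :=
  ∫⁻ t in Ioi (0:ℝ), hc n δ {x | x ∈ Ω ∧ ENNReal.ofReal t < f x}

/-!
The Choquet integral controls a Lebesgue norm. Covering by balls gives `|E| ≤ ω H(E) ^ (n/δ)`, with
`ω` the volume of the unit ball, and since `t H({f > t}) ≤ ∫ f dH`, the layer cake formula yields
`∫ f ^ (n/δ) dx ≤ (n/δ) ω (∫ f dH) ^ (n/δ)`. With `f = |g| ^ p` this is the embedding
`‖g‖_q ≤ C (∫ |g| ^ p dH) ^ (1/p)` for `q = pn/δ`. As `q > n`, the classical Morrey bound in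
`W^{1,q}` then applies to `u`. It is obtained by averaging
`|u x| ≤ |u (x + z)| + ∫₀¹ |∇u (x + tz)| dt` over `z` in the unit ball: by Hölder, the gradient term
at time `t` is at most a constant times `t ^ (-n/q) ‖∇u‖_q`, and `t ^ (-n/q)` is integrable.
-/

section ENNRealInequalities

lemma rpow_eq_mul_rpow_sub_one (b : ℝ≥0∞) {θ : ℝ} (hθ : 1 ≤ θ) :
    b ^ θ = b * b ^ (θ - 1) := by
  conv_lhs => rw [← add_sub_cancel 1 θ]
  rw [ENNReal.rpow_add_of_nonneg _ _ zero_le_one (sub_nonneg.2 hθ), ENNReal.rpow_one]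

lemma tsum_rpow_le_rpow_tsum {ι : Type*} (a : ι → ℝ≥0∞) {θ : ℝ} (hθ : 1 ≤ θ) :
    ∑' i, a i ^ θ ≤ (∑' i, a i) ^ θ := by
  have : 0 ≤ θ - 1 := sub_nonneg.2 hθ
  calc ∑' i, a i ^ θ = ∑' i, a i * a i ^ (θ - 1) := by
        simp only [rpow_eq_mul_rpow_sub_one _ hθ]
    _ ≤ ∑' i, a i * (∑' j, a j) ^ (θ - 1) := by
        gcongr with i
        exact ENNReal.le_tsum i
    _ = (∑' i, a i) ^ θ := by
        rw [ENNReal.tsum_mul_right, rpow_eq_mul_rpow_sub_one _ hθ]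

lemma ofReal_mul_le_lintegral_Ioi_of_antitoneOn {φ : ℝ → ℝ≥0∞} (hφ : AntitoneOn φ (Ioi 0))
    (t : ℝ) : ENNReal.ofReal t * φ t ≤ ∫⁻ s in Ioi 0, φ s := by
  calc ENNReal.ofReal t * φ t = ∫⁻ _ in Ioc 0 t, φ t := by simp [mul_comm]
    _ ≤ ∫⁻ s in Ioc 0 t, φ s := setLIntegral_mono' measurableSet_Ioc fun s hs =>
        hφ hs.1 (hs.1.trans_le hs.2) hs.2
    _ ≤ ∫⁻ s in Ioi 0, φ s := lintegral_mono_set Ioc_subset_Ioi_self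

lemma lintegral_Ioi_rpow_mul_rpow_le_of_antitoneOn {φ : ℝ → ℝ≥0∞} (hφ : AntitoneOn φ (Ioi 0))
    {θ : ℝ} (hθ : 1 ≤ θ) :
    ∫⁻ t in Ioi 0, φ t ^ θ * ENNReal.ofReal (t ^ (θ - 1)) ≤ (∫⁻ t in Ioi 0, φ t) ^ θ := by
  have hθ' : 0 ≤ θ - 1 := sub_nonneg.2 hθ
  calc ∫⁻ t in Ioi 0, φ t ^ θ * ENNReal.ofReal (t ^ (θ - 1))
      = ∫⁻ t in Ioi 0, φ t * (ENNReal.ofReal t * φ t) ^ (θ - 1) := by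
        refine setLIntegral_congr_fun measurableSet_Ioi fun t ht => ?_
        rw [rpow_eq_mul_rpow_sub_one _ hθ, ENNReal.mul_rpow_of_nonneg _ _ hθ',
          ENNReal.ofReal_rpow_of_pos ht, mul_assoc, mul_comm (φ t ^ (θ - 1))]
    _ ≤ ∫⁻ t in Ioi 0, φ t * (∫⁻ s in Ioi 0, φ s) ^ (θ - 1) := by
        gcongr with t
        exact ofReal_mul_le_lintegral_Ioi_of_antitoneOn hφ t
    _ = (∫⁻ t in Ioi 0, φ t) ^ θ := by
        rw [lintegral_mul_const'' _ (aemeasurable_restrict_of_antitoneOn measurableSet_Ioi hφ),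
          rpow_eq_mul_rpow_sub_one _ hθ]

lemma lintegral_Ioc_zero_one_rpow_ne_top {a : ℝ} (ha : -1 < a) :
    ∫⁻ t in Ioc (0 : ℝ) 1, ENNReal.ofReal (t ^ a) ≠ ⊤ :=
  ((intervalIntegrable_iff_integrableOn_Ioc_of_le zero_le_one).1
    (intervalIntegral.intervalIntegrable_rpow' ha)).lintegral_lt_top.ne

end ENNRealInequalities

section HausdorffContent

variable {n : ℕ} {δ : ℝ}

lemma hc_mono : Monotone (hc n δ) := fun _ _ hEF =>
  iInf_mono fun _ => iInf_mono fun _ => iInf_mono fun _ => iInf_mono' fun hF =>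
    ⟨hEF.trans hF, le_rfl⟩

lemma volume_le_mul_hc_rpow (hδ : 0 < δ) (hδn : δ ≤ n) (E : Set (EuclideanSpace ℝ (Fin n))) :
    volume E ≤ volume (ball (0 : EuclideanSpace ℝ (Fin n)) 1) * hc n δ E ^ ((n : ℝ) / δ) := by
  set ω := volume (ball (0 : EuclideanSpace ℝ (Fin n)) 1)
  have hθ : 1 ≤ (n : ℝ) / δ := (one_le_div hδ).2 hδn
  have hω : ω ≠ 0 := (measure_ball_pos _ _ one_pos).ne'
  have hω' : ω ≠ ⊤ := measure_ball_lt_top.ne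
  rw [mul_comm, ← ENNReal.div_le_iff hω hω', ← ENNReal.rpow_inv_le_iff (by positivity)]
  refine le_iInf fun c => le_iInf fun r => le_iInf fun hr => le_iInf fun hE => ?_
  rw [ENNReal.rpow_inv_le_iff (by positivity), ENNReal.div_le_iff hω hω']
  have volume_ball (i : ℕ) :
      volume (ball (c i) (r i)) = ENNReal.ofReal (r i ^ δ) ^ ((n : ℝ) / δ) * ω := by
    rw [Measure.addHaar_ball_of_pos _ _ (hr i), finrank_euclideanSpace_fin,
      ENNReal.ofReal_rpow_of_pos (Real.rpow_pos_of_pos (hr i) _),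
      ← Real.rpow_mul (hr i).le, mul_div_cancel₀ _ hδ.ne', Real.rpow_natCast]
  calc volume E ≤ ∑' i, volume (ball (c i) (r i)) :=
        (measure_mono hE).trans (measure_iUnion_le _)
    _ = (∑' i, ENNReal.ofReal (r i ^ δ) ^ ((n : ℝ) / δ)) * ω := by
        simp only [volume_ball, ENNReal.tsum_mul_right]
    _ ≤ (∑' i, ENNReal.ofReal (r i ^ δ)) ^ ((n : ℝ) / δ) * ω := by
        gcongr
        exact tsum_rpow_le_rpow_tsum _ hθ

lemma lintegral_rpow_le_choquet_rpow (hδ : 0 < δ) (hδn : δ ≤ n)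
    {f : EuclideanSpace ℝ (Fin n) → ℝ} (hf : AEMeasurable f) (hf0 : 0 ≤ f) :
    ∫⁻ y, ENNReal.ofReal (f y ^ ((n : ℝ) / δ)) ≤
      ENNReal.ofReal (n / δ) * volume (ball (0 : EuclideanSpace ℝ (Fin n)) 1) *
        choquet n δ univ (fun y => ENNReal.ofReal (f y)) ^ ((n : ℝ) / δ) := by
  have hθ : 1 ≤ (n : ℝ) / δ := (one_le_div hδ).2 hδn
  set θ := (n : ℝ) / δ
  set ω := volume (ball (0 : EuclideanSpace ℝ (Fin n)) 1)
  let φ : ℝ → ℝ≥0∞ := fun t => hc n δ {y | t < f y}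
  have hφ : Antitone φ := fun s t hst => hc_mono fun y (hy : t < f y) => hst.trans_lt hy
  have choquet_eq : choquet n δ univ (fun y => ENNReal.ofReal (f y)) = ∫⁻ t in Ioi 0, φ t := by
    refine setLIntegral_congr_fun measurableSet_Ioi fun t ht => ?_
    simp only [φ, mem_univ, true_and, ENNReal.ofReal_lt_ofReal_iff_of_nonneg (mem_Ioi.1 ht).le]
  calc ∫⁻ y, ENNReal.ofReal (f y ^ θ)
      = ENNReal.ofReal θ *
          ∫⁻ t in Ioi 0, volume {y | t < f y} * ENNReal.ofReal (t ^ (θ - 1)) :=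
        lintegral_rpow_eq_lintegral_meas_lt_mul _ (.of_forall hf0) hf (by positivity)
    _ ≤ ENNReal.ofReal θ * ∫⁻ t in Ioi 0, ω * φ t ^ θ * ENNReal.ofReal (t ^ (θ - 1)) := by
        gcongr with t
        exact volume_le_mul_hc_rpow hδ hδn _
    _ = ENNReal.ofReal θ * (ω * ∫⁻ t in Ioi 0, φ t ^ θ * ENNReal.ofReal (t ^ (θ - 1))) := by
        simp only [mul_assoc]
        rw [lintegral_const_mul' _ _ measure_ball_lt_top.ne]
    _ ≤ ENNReal.ofReal θ * (ω * (∫⁻ t in Ioi 0, φ t) ^ θ) := by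
        gcongr
        exact lintegral_Ioi_rpow_mul_rpow_le_of_antitoneOn (hφ.antitoneOn _) hθ
    _ = _ := by rw [choquet_eq, mul_assoc]

lemma eLpNorm_le_mul_choquet_rpow {F : Type*} [NormedAddCommGroup F] {p : ℝ} (hδ : 0 < δ)
    (hδn : δ ≤ n) (hp : 0 < p) {g : EuclideanSpace ℝ (Fin n) → F}
    (hg : AEStronglyMeasurable g) :
    eLpNorm g (ENNReal.ofReal (p * (n / δ))) volume ≤
      (ENNReal.ofReal (n / δ) * volume (ball (0 : EuclideanSpace ℝ (Fin n)) 1)) ^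
          (1 / (p * (n / δ))) *
        choquet n δ univ (fun y => ENNReal.ofReal (‖g y‖ ^ p)) ^ (1 / p) := by
  have hθ : 0 < (n : ℝ) / δ := div_pos (hδ.trans_le hδn) hδ
  have hq : 0 < p * (n / δ) := mul_pos hp hθ
  have enorm_rpow (y : EuclideanSpace ℝ (Fin n)) :
      ‖g y‖ₑ ^ (p * (n / δ)) = ENNReal.ofReal ((‖g y‖ ^ p) ^ ((n : ℝ) / δ)) := by
    rw [← Real.rpow_mul (norm_nonneg _), ← ENNReal.ofReal_rpow_of_nonneg (norm_nonneg _) hq.le,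
      ofReal_norm]
  rw [eLpNorm_eq_lintegral_rpow_enorm_toReal (ENNReal.ofReal_pos.2 hq).ne' ENNReal.ofReal_ne_top,
    ENNReal.toReal_ofReal hq.le]
  simp only [enorm_rpow]
  grw [lintegral_rpow_le_choquet_rpow hδ hδn (hg.norm.aemeasurable.pow_const p)
    (fun y => by positivity)]
  rw [ENNReal.mul_rpow_of_nonneg _ _ (by positivity), ← ENNReal.rpow_mul]
  have hn : (n : ℝ) ≠ 0 := (hδ.trans_le hδn).ne'
  have exponent_eq : (n : ℝ) / δ * (1 / (p * (n / δ))) = 1 / p := by field_simp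
  rw [exponent_eq]

end HausdorffContent

section Morrey

variable {E F : Type*} [NormedAddCommGroup E] [NormedSpace ℝ E] [NormedAddCommGroup F]

lemma enorm_le_enorm_add_lintegral_enorm_fderiv [NormedSpace ℝ F] {u : E → F}
    (hu : ContDiff ℝ 1 u) (x z : E) :
    ‖u x‖ₑ ≤ ‖u (x + z)‖ₑ + (∫⁻ t in Ioc (0 : ℝ) 1, ‖fderiv ℝ u (x + t • z)‖ₑ) * ‖z‖ₑ := by
  have deriv_segment (t : ℝ) :
      deriv (fun t : ℝ => u (x + t • z)) t = fderiv ℝ u (x + t • z) z := by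
    have h : HasDerivAt (fun t : ℝ => x + t • z) z t := by
      simpa using ((hasDerivAt_id t).smul_const z).const_add x
    exact ((hu.differentiable one_ne_zero _).hasFDerivAt.comp_hasDerivAt t h).deriv
  have hsegment : ContDiff ℝ 1 fun t : ℝ => u (x + t • z) := hu.comp (by fun_prop)
  have enorm_increment_le : ‖u (x + z) - u x‖ₑ ≤
      (∫⁻ t in Ioc (0 : ℝ) 1, ‖fderiv ℝ u (x + t • z)‖ₑ) * ‖z‖ₑ := by
    calc ‖u (x + z) - u x‖ₑ
        ≤ ∫⁻ t in Icc (0 : ℝ) 1, ‖deriv (fun t : ℝ => u (x + t • z)) t‖ₑ := by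
          simpa using
            enorm_sub_le_lintegral_deriv_of_contDiffOn_Icc hsegment.contDiffOn zero_le_one
      _ ≤ ∫⁻ t in Ioc (0 : ℝ) 1, ‖fderiv ℝ u (x + t • z)‖ₑ * ‖z‖ₑ := by
          rw [← restrict_Ioc_eq_restrict_Icc]
          gcongr with t
          rw [deriv_segment]
          exact ContinuousLinearMap.le_opENorm _ _
      _ = _ := lintegral_mul_const' _ _ enorm_ne_top
  calc ‖u x‖ₑ = ‖u (x + z) - (u (x + z) - u x)‖ₑ := by simp
    _ ≤ ‖u (x + z)‖ₑ + ‖u (x + z) - u x‖ₑ := enorm_sub_le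
    _ ≤ _ := by gcongr

variable [FiniteDimensional ℝ E] [MeasurableSpace E] [BorelSpace E] (μ : Measure E)
  [μ.IsAddHaarMeasure]

lemma map_add_smul_addHaar (x : E) {t : ℝ} (ht : 0 < t) :
    μ.map (fun z => x + t • z) = ENNReal.ofReal (t ^ (-(Module.finrank ℝ E : ℝ))) • μ := by
  rw [show (fun z => x + t • z) = (x + ·) ∘ (t • ·) from rfl,
    ← Measure.map_map (by fun_prop) (by fun_prop),
    Measure.map_addHaar_smul _ ht.ne', Measure.map_smul, map_add_left_eq_self,
    Real.rpow_neg ht.le, Real.rpow_natCast, abs_of_pos (by positivity)]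

variable {μ} {q : ℝ≥0∞}

lemma eLpNorm_comp_add_smul {ε : Type*} [TopologicalSpace ε] [ContinuousENorm ε] (g : E → ε)
    (x : E) {t : ℝ} (ht : 0 < t) :
    eLpNorm (fun z => g (x + t • z)) q μ =
      ENNReal.ofReal (t ^ (-(Module.finrank ℝ E / q.toReal))) * eLpNorm g q μ := by
  have hemb : MeasurableEmbedding fun z : E => x + t • z :=
    (measurableEmbedding_addLeft x).comp (measurableEmbedding_const_smul₀ ht.ne')
  change eLpNorm (g ∘ fun z => x + t • z) q μ = _
  rw [← hemb.eLpNorm_map_measure, map_add_smul_addHaar μ x ht,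
    eLpNorm_smul_measure_of_ne_zero (by positivity), smul_eq_mul,
    ENNReal.ofReal_rpow_of_pos (by positivity), ← Real.rpow_mul ht.le, one_div,
    ENNReal.toReal_inv, neg_mul, ← div_eq_mul_inv]

lemma setLIntegral_enorm_comp_add_smul_le {g : E → F} (hq : 1 ≤ q)
    (hg : AEStronglyMeasurable g μ) (s : Set E) (x : E) {t : ℝ} (ht : 0 < t) :
    ∫⁻ z in s, ‖g (x + t • z)‖ₑ ∂μ ≤
      ENNReal.ofReal (t ^ (-(Module.finrank ℝ E / q.toReal))) * eLpNorm g q μ *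
        μ s ^ (1 - 1 / q.toReal) := by
  have hcomp : AEStronglyMeasurable (fun z => g (x + t • z)) μ := by
    refine AEStronglyMeasurable.comp_aemeasurable (f := fun z => x + t • z) ?_ (by fun_prop)
    rw [map_add_smul_addHaar μ x ht]
    exact hg.smul_measure _
  calc ∫⁻ z in s, ‖g (x + t • z)‖ₑ ∂μ
      = eLpNorm (fun z => g (x + t • z)) 1 (μ.restrict s) := eLpNorm_one_eq_lintegral_enorm.symm
    _ ≤ eLpNorm (fun z => g (x + t • z)) q (μ.restrict s) * μ s ^ (1 - 1 / q.toReal) := by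
        simpa using eLpNorm_le_eLpNorm_mul_rpow_measure_univ hq (hcomp.restrict (s := s))
    _ ≤ eLpNorm (fun z => g (x + t • z)) q μ * μ s ^ (1 - 1 / q.toReal) := by
        gcongr
        exact Measure.restrict_le_self
    _ = _ := by rw [eLpNorm_comp_add_smul g x ht]

variable [NormedSpace ℝ F]

lemma measure_ball_mul_enorm_le {u : E → F} (hu : ContDiff ℝ 1 u) (hq : 1 ≤ q) (x : E) :
    μ (ball 0 1) * ‖u x‖ₑ ≤ (eLpNorm u q μ +
      (∫⁻ t in Ioc (0 : ℝ) 1, ENNReal.ofReal (t ^ (-(Module.finrank ℝ E / q.toReal)))) *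
        eLpNorm (fderiv ℝ u) q μ) * μ (ball 0 1) ^ (1 - 1 / q.toReal) := by
  set B : Set E := ball 0 1
  set m := μ B ^ (1 - 1 / q.toReal)
  have hu_cont : Continuous u := hu.continuous
  have hdu_cont : Continuous (fderiv ℝ u) := hu.continuous_fderiv one_ne_zero
  have lintegral_value_le : ∫⁻ z in B, ‖u (x + z)‖ₑ ∂μ ≤ eLpNorm u q μ * m := by
    simpa only [one_smul, Real.one_rpow, ENNReal.ofReal_one, one_mul] using
      setLIntegral_enorm_comp_add_smul_le (μ := μ) hq hu_cont.aestronglyMeasurable B x one_pos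
  have lintegral_gradient_le :
      ∫⁻ z in B, (∫⁻ t in Ioc (0 : ℝ) 1, ‖fderiv ℝ u (x + t • z)‖ₑ) ∂μ ≤
        (∫⁻ t in Ioc (0 : ℝ) 1, ENNReal.ofReal (t ^ (-(Module.finrank ℝ E / q.toReal)))) *
          eLpNorm (fderiv ℝ u) q μ * m := by
    rw [lintegral_lintegral_swap (by fun_prop), mul_assoc,
      ← lintegral_mul_const _ (by fun_prop)]
    refine setLIntegral_mono' measurableSet_Ioc fun t ht => ?_
    rw [← mul_assoc]
    exact setLIntegral_enorm_comp_add_smul_le hq hdu_cont.aestronglyMeasurable B x ht.1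
  calc μ B * ‖u x‖ₑ
    _ = ∫⁻ _ in B, ‖u x‖ₑ ∂μ := by simp [mul_comm]
    _ ≤ ∫⁻ z in B, (‖u (x + z)‖ₑ + ∫⁻ t in Ioc (0 : ℝ) 1, ‖fderiv ℝ u (x + t • z)‖ₑ) ∂μ := by
        refine setLIntegral_mono' measurableSet_ball fun z hz => ?_
        have hz1 : ‖z‖ₑ ≤ 1 := by
          rw [← ofReal_norm]
          exact ENNReal.ofReal_le_one.2 (mem_ball_zero_iff.1 hz).le
        exact (enorm_le_enorm_add_lintegral_enorm_fderiv hu x z).trans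
          (add_le_add_right (mul_le_of_le_one_right' hz1) _)
    _ = ∫⁻ z in B, ‖u (x + z)‖ₑ ∂μ +
          ∫⁻ z in B, (∫⁻ t in Ioc (0 : ℝ) 1, ‖fderiv ℝ u (x + t • z)‖ₑ) ∂μ :=
        lintegral_add_left (Continuous.measurable (by fun_prop)) _
    _ ≤ _ := (add_le_add lintegral_value_le lintegral_gradient_le).trans_eq (add_mul _ _ _).symm

variable (F μ) in
lemma exists_enorm_le_mul_eLpNorm_add_eLpNorm_fderiv (hq : 1 ≤ q) (hdim : Module.finrank ℝ E < q) :
    ∃ C : ℝ≥0∞, C ≠ ⊤ ∧ ∀ u : E → F, ContDiff ℝ 1 u → ∀ x,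
      ‖u x‖ₑ ≤ C * (eLpNorm u q μ + eLpNorm (fderiv ℝ u) q μ) := by
  have hexp : -1 < -(Module.finrank ℝ E / q.toReal) := by
    rcases eq_or_ne q ⊤ with rfl | hq_top
    · simp
    have hdim' : (Module.finrank ℝ E : ℝ) < q.toReal := by
      simpa using ENNReal.toReal_strict_mono hq_top hdim
    exact neg_lt_neg ((div_lt_one ((Nat.cast_nonneg _).trans_lt hdim')).2 hdim')
  set J := ∫⁻ t in Ioc (0 : ℝ) 1, ENNReal.ofReal (t ^ (-(Module.finrank ℝ E / q.toReal)))
  have hJ : J ≠ ⊤ := lintegral_Ioc_zero_one_rpow_ne_top hexp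
  set V := μ (ball 0 1)
  have hV : V ≠ 0 := (measure_ball_pos _ _ one_pos).ne'
  have hV' : V ≠ ⊤ := measure_ball_lt_top.ne
  refine ⟨V⁻¹ * (V ^ (1 - 1 / q.toReal) * (1 + J)), ?_, fun u hu x => ?_⟩
  · finiteness
  rw [mul_assoc, ← ENNReal.mul_le_iff_le_inv hV hV']
  calc V * ‖u x‖ₑ
      ≤ (eLpNorm u q μ + J * eLpNorm (fderiv ℝ u) q μ) * V ^ (1 - 1 / q.toReal) :=
        measure_ball_mul_enorm_le hu hq x
    _ ≤ ((1 + J) * eLpNorm u q μ + (1 + J) * eLpNorm (fderiv ℝ u) q μ) *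
          V ^ (1 - 1 / q.toReal) := by
        gcongr
        · exact le_mul_of_one_le_left' le_self_add
        · exact le_add_self
    _ = _ := by ring

end Morrey

theorem stmt_9_general {F : Type*} [NormedAddCommGroup F] [NormedSpace ℝ F] {n : ℕ} {δ p : ℝ}
    (hδ : 0 < δ) (hδn : δ ≤ n) (hp : δ < p) :
    ∃ c : ℝ≥0∞, c ≠ ⊤ ∧
      ∀ u : EuclideanSpace ℝ (Fin n) → F, ContDiff ℝ 1 u → ∀ x,
        ‖u x‖ₑ ≤
          c * ((choquet n δ univ (fun y => ENNReal.ofReal (‖u y‖ ^ p))) ^ (1 / p) +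
            (choquet n δ univ (fun y => ENNReal.ofReal (‖fderiv ℝ u y‖ ^ p))) ^ (1 / p)) := by
  have hp0 : 0 < p := hδ.trans hp
  have hn : 0 < (n : ℝ) := hδ.trans_le hδn
  have n_lt_exponent : (n : ℝ) < p * (n / δ) := by
    rw [mul_div_left_comm]
    exact lt_mul_of_one_lt_right hn ((one_lt_div hδ).2 hp)
  have hdim : Module.finrank ℝ (EuclideanSpace ℝ (Fin n)) < ENNReal.ofReal (p * (n / δ)) := by
    rwa [finrank_euclideanSpace_fin, ← ENNReal.ofReal_natCast,
      ENNReal.ofReal_lt_ofReal_iff_of_nonneg hn.le]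
  have one_le_exponent : 1 ≤ ENNReal.ofReal (p * (n / δ)) := by
    have one_le_n : (1 : ℝ) ≤ n := mod_cast Nat.cast_pos.1 hn
    exact ENNReal.one_le_ofReal.2 (one_le_n.trans n_lt_exponent.le)
  obtain ⟨C, hC, morrey⟩ :=
    exists_enorm_le_mul_eLpNorm_add_eLpNorm_fderiv F volume one_le_exponent hdim
  set D := (ENNReal.ofReal (n / δ) * volume (ball (0 : EuclideanSpace ℝ (Fin n)) 1)) ^
    (1 / (p * (n / δ)))
  refine ⟨C * D, by finiteness, fun u hu x => (morrey u hu x).trans ?_⟩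
  have hdu_cont : Continuous (fderiv ℝ u) := hu.continuous_fderiv one_ne_zero
  rw [mul_assoc, mul_add D]
  gcongr
  · exact eLpNorm_le_mul_choquet_rpow hδ hδn hp0 hu.continuous.aestronglyMeasurable
  · exact eLpNorm_le_mul_choquet_rpow hδ hδn hp0 hdu_cont.aestronglyMeasurable

theorem stmt_9 (n : ℕ) (hn : 2 ≤ n) (δ p : ℝ) (hδ : 0 < δ) (hδn : δ ≤ n) (hp : δ < p) :
    ∃ c : ℝ≥0∞, c ≠ ⊤ ∧
      ∀ u : EuclideanSpace ℝ (Fin n) → ℝ, ContDiff ℝ 1 u →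
        ∀ x : EuclideanSpace ℝ (Fin n),
          ENNReal.ofReal (|u x|) ≤
            c * ((choquet n δ Set.univ (fun y => ENNReal.ofReal (|u y| ^ p))) ^ (1 / p) +
              (choquet n δ Set.univ (fun y => ENNReal.ofReal (‖fderiv ℝ u y‖ ^ p))) ^ (1 / p)) := by
  simpa only [← Real.norm_eq_abs, ofReal_norm] using stmt_9_general hδ hδn hp
end

section
/- (Weak-type estimate at the exponent $\delta/n$ for compactly supported functions) Let $\Omega\subseteq\mathbb{R}^n$ be a bounded domain and $\delta\in(0,n]$. There is a constant $c=c(n,\delta)$ such that for every $u\in C^1_0(\Omega)$ and every $t>0$, $\mathcal{H}^{\delta}_\infty(\{x\in\Omega : |u(x)|>t\})^{(n-1)/\delta} \le \frac{c}{t}\Big(\int_\Omega|\nabla u(x)|^{\delta/n}\,d\mathcal{H}^{\delta}_\infty\Big)^{n/\delta}$. -/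
open MeasureTheory Metric Set ENNReal

/-! Covering the superlevel sets `{2 ^ k < |∇u| ^ (δ / n)}` by balls `B (c i) (r i)`, the Choquet
integral dominates `∑ a i ^ (δ / n) * r i ^ δ` up to a constant, where `|∇u| ≤ ∑ a i * 1_{B i}`.
Averaging the fundamental theorem of calculus over rays bounds `|u|` by the Riesz potential of
`|∇u|`, and hence by that of the atomic measure with masses `w i = a i * r i ^ n` at the centres,
for which `∑ w i ^ (δ / n) = ∑ a i ^ (δ / n) * r i ^ δ`. Hedberg's inequality turns superlevel sets
of the potential into superlevel sets of the maximal function, and a Vitali covering bounds their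
content by the sum of the `(δ / n)`-th powers of the masses of disjoint balls. Since `δ / n ≤ 1`,
that power is subadditive, and disjoint balls count each atom once, so the sum is at most
`∑ w i ^ (δ / n)`. -/

/-- The purely atomic measure with mass `w i` at the point `c i`. Discretizing a weighted sum of
indicators of balls into such a measure keeps each summand inside a single member of a disjoint
family. -/
noncomputable def atomicMeasure {ι X : Type*} [MeasurableSpace X] (c : ι → X) (w : ι → ℝ≥0∞) :
    Measure X :=
  .sum fun i => w i • .dirac (c i)

/-- The Riesz potential of order one of a measure on a `d`-dimensional space, in layer-cake form:
up to a constant it is `∫ dist x y ^ (1 - d) ∂ν y`. -/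
noncomputable def rieszPotential {X : Type*} [PseudoMetricSpace X] [MeasurableSpace X] (d : ℕ)
    (ν : Measure X) (x : X) : ℝ≥0∞ :=
  ∫⁻ s in Ioi (0 : ℝ), ν (ball x s) / ENNReal.ofReal s ^ d

/-- The centred Hardy–Littlewood maximal function of a measure, normalized by the `d`-th power of
the radius. -/
noncomputable def maximalFunction {X : Type*} [PseudoMetricSpace X] [MeasurableSpace X] (d : ℕ)
    (ν : Measure X) (x : X) : ℝ≥0∞ :=
  ⨆ (s : ℝ) (_ : 0 < s), ν (ball x s) / ENNReal.ofReal s ^ d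

section AtomicMeasure

variable {ι X : Type*} [MeasurableSpace X] {c : ι → X} {w : ι → ℝ≥0∞} {p : ℝ}

lemma rpow_tsum_le_tsum_rpow (f : ι → ℝ≥0∞) (hp : 0 < p) (hp1 : p ≤ 1) :
    (∑' i, f i) ^ p ≤ ∑' i, f i ^ p := by
  have finite_case (s : Finset ι) : (∑ i ∈ s, f i) ^ p ≤ ∑ i ∈ s, f i ^ p :=
    Finset.le_sum_of_subadditive (fun x : ℝ≥0∞ => x ^ p) (ENNReal.zero_rpow_of_pos hp).le
      (fun x y => ENNReal.rpow_add_le_add_rpow x y hp.le hp1) s f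
  exact le_of_tendsto ((ENNReal.continuous_rpow_const.tendsto _).comp
    (ENNReal.summable (f := f)).hasSum)
    (.of_forall fun s => (finite_case s).trans (ENNReal.sum_le_tsum s))

lemma atomicMeasure_apply {S : Set X} (hS : MeasurableSet S) :
    atomicMeasure c w S = ∑' i, S.indicator (fun _ => w i) (c i) := by
  simp only [atomicMeasure, Measure.sum_apply _ hS, Measure.smul_apply, Measure.dirac_apply' _ hS,
    smul_eq_mul]
  refine tsum_congr fun i => ?_
  by_cases hi : c i ∈ S <;> simp [hi]

lemma atomicMeasure_univ : atomicMeasure c w univ = ∑' i, w i := by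
  simp only [atomicMeasure_apply .univ, indicator_univ]

lemma atomicMeasure_rpow_le (hp : 0 < p) (hp1 : p ≤ 1) {S : Set X} (hS : MeasurableSet S) :
    atomicMeasure c w S ^ p ≤ atomicMeasure c (fun i => w i ^ p) S := by
  rw [atomicMeasure_apply hS, atomicMeasure_apply hS]
  refine (rpow_tsum_le_tsum_rpow _ hp hp1).trans_eq (tsum_congr fun i => ?_)
  by_cases hi : c i ∈ S <;> simp [hi, hp]

lemma atomicMeasure_univ_rpow_le (hp : 0 < p) (hp1 : p ≤ 1) :
    atomicMeasure c w univ ^ p ≤ ∑' i, w i ^ p :=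
  (atomicMeasure_rpow_le hp hp1 .univ).trans_eq atomicMeasure_univ

lemma tsum_atomicMeasure_rpow_le {β : Type*} (hp : 0 < p) (hp1 : p ≤ 1) {B : β → Set X}
    (hB : ∀ b, MeasurableSet (B b)) (hdisj : Pairwise (Function.onFun Disjoint B)) :
    ∑' b, atomicMeasure c w (B b) ^ p ≤ ∑' i, w i ^ p :=
  calc ∑' b, atomicMeasure c w (B b) ^ p
      ≤ ∑' b, atomicMeasure c (fun i => w i ^ p) (B b) :=
        ENNReal.tsum_le_tsum fun b => atomicMeasure_rpow_le hp hp1 (hB b)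
    _ ≤ atomicMeasure c (fun i => w i ^ p) (⋃ b, B b) :=
        tsum_meas_le_meas_iUnion_of_disjoint _ hB hdisj
    _ ≤ atomicMeasure c (fun i => w i ^ p) univ := measure_mono (subset_univ _)
    _ = ∑' i, w i ^ p := atomicMeasure_univ

end AtomicMeasure

section Potential

variable {X : Type*} [PseudoMetricSpace X] [MeasurableSpace X] {d : ℕ}

lemma rieszPotential_atomicMeasure [OpensMeasurableSpace X] {ι : Type*} [Countable ι] (c : ι → X)
    (w : ι → ℝ≥0∞) (x : X) :
    rieszPotential d (atomicMeasure c w) x =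
      ∑' i, w i * rieszPotential d (Measure.dirac (c i)) x := by
  have hmeas (i : ι) : Measurable fun s => Measure.dirac (c i) (ball x s) / ENNReal.ofReal s ^ d :=
    (Monotone.measurable fun _ _ hst => measure_mono (ball_subset_ball hst)).div (by fun_prop)
  simp only [rieszPotential, atomicMeasure, Measure.sum_apply _ measurableSet_ball,
    Measure.smul_apply, smul_eq_mul, div_eq_mul_inv, ← ENNReal.tsum_mul_right, mul_assoc]
  simp only [← div_eq_mul_inv]
  rw [lintegral_tsum fun i => ((hmeas i).const_mul _).aemeasurable]
  simp only [lintegral_const_mul _ (hmeas _)]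

lemma lintegral_Ioi_inv_ofReal_pow (hd : 2 ≤ d) {ρ : ℝ} (hρ : 0 < ρ) :
    ∫⁻ s in Ioi ρ, (ENNReal.ofReal s ^ d)⁻¹ = ENNReal.ofReal (ρ ^ (1 - d : ℝ) / (d - 1)) := by
  have hd' : (2 : ℝ) ≤ d := by exact_mod_cast hd
  calc ∫⁻ s in Ioi ρ, (ENNReal.ofReal s ^ d)⁻¹
      = ∫⁻ s in Ioi ρ, ENNReal.ofReal (s ^ (-d : ℝ)) := by
        refine setLIntegral_congr_fun measurableSet_Ioi fun s hs => ?_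
        have hs0 : 0 < s := hρ.trans hs
        simp only [Real.rpow_neg hs0.le, Real.rpow_natCast,
          ENNReal.ofReal_inv_of_pos (pow_pos hs0 d), ENNReal.ofReal_pow hs0.le]
    _ = ENNReal.ofReal (∫ s in Ioi ρ, s ^ (-d : ℝ)) :=
        (ofReal_integral_eq_lintegral_ofReal (integrableOn_Ioi_rpow_of_lt (by linarith) hρ)
          ((ae_restrict_mem measurableSet_Ioi).mono fun s hs =>
            Real.rpow_nonneg (hρ.trans hs).le _)).symm
    _ = ENNReal.ofReal (ρ ^ (1 - d : ℝ) / (d - 1)) := by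
        rw [integral_Ioi_rpow_of_lt (by linarith) hρ, neg_add_eq_sub, neg_div, ← div_neg, neg_sub]

/-- The integral is split at the radius where the two bounds coincide. -/
lemma lintegral_min_div_pow_le (hd : 2 ≤ d) {M N : ℝ≥0∞} (hM0 : M ≠ 0) (hM : M ≠ ∞) (hN0 : N ≠ 0)
    (hN : N ≠ ∞) :
    ∫⁻ s in Ioi (0 : ℝ), min M (N / ENNReal.ofReal s ^ d) ≤
      2 * (M ^ (1 - (d : ℝ)⁻¹) * N ^ (d : ℝ)⁻¹) := by
  have hd' : (2 : ℝ) ≤ d := by exact_mod_cast hd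
  obtain ⟨m, hm, rfl⟩ : ∃ m : ℝ, 0 < m ∧ M = ENNReal.ofReal m :=
    ⟨M.toReal, ENNReal.toReal_pos hM0 hM, (ENNReal.ofReal_toReal hM).symm⟩
  obtain ⟨k, hk, rfl⟩ : ∃ k : ℝ, 0 < k ∧ N = ENNReal.ofReal k :=
    ⟨N.toReal, ENNReal.toReal_pos hN0 hN, (ENNReal.ofReal_toReal hN).symm⟩
  set ρ : ℝ := (k / m) ^ (d : ℝ)⁻¹
  have hρ : 0 < ρ := by positivity
  have hρd : m * ρ ^ (d : ℝ) = k := by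
    rw [Real.rpow_inv_rpow (by positivity) (by positivity), mul_div_cancel₀ _ hm.ne']
  have near : ∫⁻ s in Ioc 0 ρ, min (ENNReal.ofReal m) (ENNReal.ofReal k / ENNReal.ofReal s ^ d) ≤
      ENNReal.ofReal (m * ρ) := by
    refine (lintegral_mono fun s => min_le_left _ _).trans_eq ?_
    rw [setLIntegral_const, Real.volume_Ioc, sub_zero, ENNReal.ofReal_mul hm.le]
  have far : ∫⁻ s in Ioi ρ, min (ENNReal.ofReal m) (ENNReal.ofReal k / ENNReal.ofReal s ^ d) ≤
      ENNReal.ofReal (m * ρ) := by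
    refine (lintegral_mono fun s => min_le_right _ _).trans ?_
    simp only [div_eq_mul_inv]
    rw [lintegral_const_mul' _ _ ENNReal.ofReal_ne_top, lintegral_Ioi_inv_ofReal_pow hd hρ,
      ← ENNReal.ofReal_mul hk.le]
    refine ENNReal.ofReal_le_ofReal ?_
    rw [← mul_div_assoc, ← hρd, mul_assoc, ← Real.rpow_add hρ, add_sub_cancel, Real.rpow_one]
    exact div_le_self (by positivity) (by linarith)
  have hmρ : m * ρ = m ^ (1 - (d : ℝ)⁻¹) * k ^ (d : ℝ)⁻¹ := by
    rw [Real.rpow_sub hm, Real.rpow_one, div_mul_eq_mul_div, mul_div_assoc,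
      ← Real.div_rpow hk.le hm.le]
  rw [ENNReal.ofReal_rpow_of_pos hm, ENNReal.ofReal_rpow_of_pos hk,
    ← ENNReal.ofReal_mul (by positivity), ← hmρ, ← Ioc_union_Ioi_eq_Ioi hρ.le,
    lintegral_union measurableSet_Ioi (Ioc_disjoint_Ioi le_rfl), two_mul]
  exact add_le_add near far

/-- Hedberg's inequality, with the total mass in place of a norm of a density. -/
lemma rieszPotential_le_maximalFunction_rpow (hd : 2 ≤ d) (ν : Measure X) (x : X) :
    rieszPotential d ν x ≤
      2 * (maximalFunction d ν x ^ (1 - (d : ℝ)⁻¹) * ν univ ^ (d : ℝ)⁻¹) := by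
  set M := maximalFunction d ν x
  have hle : rieszPotential d ν x ≤ ∫⁻ s in Ioi (0 : ℝ), min M (ν univ / ENNReal.ofReal s ^ d) :=
    setLIntegral_mono' measurableSet_Ioi fun s hs => le_min
      (le_iSup₂ (f := fun s (_ : (0 : ℝ) < s) => ν (ball x s) / ENNReal.ofReal s ^ d) s hs)
      (by gcongr; exact subset_univ _)
  refine hle.trans ?_
  have hd' : 0 < (d : ℝ)⁻¹ := by positivity
  have hd1 : 0 < 1 - (d : ℝ)⁻¹ := sub_pos.2 (inv_lt_one_of_one_lt₀ (by exact_mod_cast hd))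
  rcases eq_or_ne M 0 with hM0 | hM0
  · simp [hM0]
  rcases eq_or_ne (ν univ) 0 with hN0 | hN0
  · simp [hN0]
  rcases eq_or_ne M ∞ with hM | hM
  · simp [hM, hd1, hN0, ENNReal.top_mul, ENNReal.rpow_eq_zero_iff, hd'.not_gt]
  rcases eq_or_ne (ν univ) ∞ with hN | hN
  · simp [hN, hd', hM0, ENNReal.mul_top, ENNReal.rpow_eq_zero_iff, hd1.not_gt]
  exact lintegral_min_div_pow_le hd hM0 hM hN0 hN

lemma setOf_lt_rieszPotential_subset (hd : 2 ≤ d) {ν : Measure X} {t D : ℝ≥0∞}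
    (hD : ν univ ^ (d : ℝ)⁻¹ ≤ D) :
    {x | t < rieszPotential d ν x} ⊆
      {x | (t / (2 * D)) ^ (1 - (d : ℝ)⁻¹)⁻¹ < maximalFunction d ν x} := by
  intro x (hx : t < _)
  have hexp : 0 < 1 - (d : ℝ)⁻¹ := sub_pos.2 (inv_lt_one_of_one_lt₀ (by exact_mod_cast hd))
  have hlt : t < maximalFunction d ν x ^ (1 - (d : ℝ)⁻¹) * (2 * D) := by
    refine hx.trans_le ((rieszPotential_le_maximalFunction_rpow hd ν x).trans ?_)
    rw [mul_left_comm]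
    gcongr
  exact (ENNReal.rpow_inv_lt_iff hexp).2 (ENNReal.div_lt_of_lt_mul hlt)

end Potential

section Gradient

open Module

variable {E F : Type*} [NormedAddCommGroup E] [NormedSpace ℝ E] [NormedAddCommGroup F]
  [NormedSpace ℝ F] {u : E → F}

lemma enorm_le_lintegral_fderiv_ray (hu : ContDiff ℝ 1 u) (hcs : HasCompactSupport u) (x : E)
    {v : E} (hv : v ≠ 0) :
    ‖u x‖ₑ ≤ ∫⁻ s in Ioi (0 : ℝ), ‖fderiv ℝ u (x + s • v)‖ₑ * ‖v‖ₑ := by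
  have hline : Topology.IsClosedEmbedding fun s : ℝ => x - s • v :=
    (Homeomorph.subLeft x).isClosedEmbedding.comp (isClosedEmbedding_smul_left (𝕜 := ℝ) hv)
  have hcomp : ContDiff ℝ 1 fun s : ℝ => u (x - s • v) := hu.comp (by fun_prop)
  have hderiv (s : ℝ) : HasDerivAt (fun s : ℝ => u (x - s • v)) (fderiv ℝ u (x - s • v) (-v)) s :=
    (hu.differentiable one_ne_zero _).hasFDerivAt.comp_hasDerivAt s
      (by simpa using ((hasDerivAt_id s).smul_const v).const_sub x)
  calc ‖u x‖ₑ
      ≤ ∫⁻ s in Iic (0 : ℝ), ‖deriv (fun s : ℝ => u (x - s • v)) s‖ₑ := by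
        simpa using HasCompactSupport.enorm_le_lintegral_Ici_deriv hcomp
          (hcs.comp_isClosedEmbedding hline) 0
    _ ≤ ∫⁻ s in Iic (0 : ℝ), ‖fderiv ℝ u (x - s • v)‖ₑ * ‖v‖ₑ :=
        lintegral_mono fun s => by
          simpa [(hderiv s).deriv] using (fderiv ℝ u (x - s • v)).le_opENorm (-v)
    _ = ∫⁻ s in Ici (0 : ℝ), ‖fderiv ℝ u (x + s • v)‖ₑ * ‖v‖ₑ := by
        simpa [sub_eq_add_neg] using
          ((Measure.measurePreserving_neg (volume : Measure ℝ)).setLIntegral_comp_preimage_emb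
            (Homeomorph.neg ℝ).measurableEmbedding
            (fun s => ‖fderiv ℝ u (x - s • v)‖ₑ * ‖v‖ₑ) (Iic 0)).symm
    _ = ∫⁻ s in Ioi (0 : ℝ), ‖fderiv ℝ u (x + s • v)‖ₑ * ‖v‖ₑ :=
        (setLIntegral_congr Ioi_ae_eq_Ici).symm

variable [FiniteDimensional ℝ E] [MeasurableSpace E] [BorelSpace E] (μ : Measure E)
  [μ.IsAddHaarMeasure]

lemma setLAverage_ball_comp_add_smul (g : E → ℝ≥0∞) (x : E) (R : ℝ) {s : ℝ} (hs : 0 < s) :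
    ⨍⁻ v in ball 0 R, g (x + s • v) ∂μ = ⨍⁻ y in ball x (s * R), g y ∂μ := by
  let e : E ≃ₜ E := (Homeomorph.smulOfNeZero s hs.ne').trans (Homeomorph.addLeft x)
  have hmap : μ.map e = ENNReal.ofReal |(s ^ finrank ℝ E)⁻¹| • μ := by
    have : ⇑e = (x + ·) ∘ (s • ·) := rfl
    rw [this, ← Measure.map_map (by fun_prop) (by fun_prop), Measure.map_addHaar_smul μ hs.ne',
      Measure.map_smul, map_add_left_eq_self]
  have hpre : e ⁻¹' ball x (s * R) = ball 0 R := by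
    ext v
    simp [e, norm_smul, abs_of_pos hs, hs]
  have hscale : ENNReal.ofReal |(s ^ finrank ℝ E)⁻¹| ≠ 0 :=
    (ENNReal.ofReal_pos.2 (by positivity)).ne'
  calc ⨍⁻ v in ball 0 R, g (x + s • v) ∂μ
      = ⨍⁻ y in ball x (s * R), g y ∂μ.map e := by
        have he := e.measurableEmbedding
        rw [setLAverage_eq, setLAverage_eq, he.restrict_map, he.lintegral_map, he.map_apply, hpre]
        rfl
    _ = ⨍⁻ y in ball x (s * R), g y ∂μ := by
        rw [setLAverage_eq, setLAverage_eq, hmap, Measure.restrict_smul, lintegral_smul_measure,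
          Measure.smul_apply, smul_eq_mul, smul_eq_mul,
          ENNReal.mul_div_mul_left _ _ hscale ENNReal.ofReal_ne_top]

lemma enorm_le_lintegral_setLAverage_fderiv [Nontrivial E] (hu : ContDiff ℝ 1 u)
    (hcs : HasCompactSupport u) (x : E) {R : ℝ} (hR : 0 < R) :
    ‖u x‖ₑ ≤ ENNReal.ofReal R *
      ∫⁻ s in Ioi (0 : ℝ), ⨍⁻ y in ball x (s * R), ‖fderiv ℝ u y‖ₑ ∂μ := by
  have hball0 : μ (ball 0 R) ≠ 0 := (measure_ball_pos μ 0 hR).ne'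
  have hmeas : Measurable fun z : E × ℝ => ‖fderiv ℝ u (x + z.2 • z.1)‖ₑ :=
    ((hu.continuous_fderiv one_ne_zero).comp (by fun_prop)).enorm.measurable
  have hray : ∀ᵐ v ∂μ, v ∈ ball (0 : E) R →
      ‖u x‖ₑ ≤ ENNReal.ofReal R * ∫⁻ s in Ioi (0 : ℝ), ‖fderiv ℝ u (x + s • v)‖ₑ := by
    filter_upwards [compl_mem_ae_iff.2 (measure_singleton (μ := μ) (0 : E))] with v hv hvR
    rw [← lintegral_const_mul' _ _ ENNReal.ofReal_ne_top]
    refine (enorm_le_lintegral_fderiv_ray hu hcs x hv).trans (lintegral_mono fun s => ?_)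
    rw [mul_comm, ← ofReal_norm v]
    gcongr
    exact (mem_ball_zero_iff.1 hvR).le
  calc ‖u x‖ₑ
      = ⨍⁻ _ in ball (0 : E) R, ‖u x‖ₑ ∂μ :=
        (setLAverage_const hball0 measure_ball_lt_top.ne _).symm
    _ ≤ ⨍⁻ v in ball (0 : E) R,
          (ENNReal.ofReal R * ∫⁻ s in Ioi (0 : ℝ), ‖fderiv ℝ u (x + s • v)‖ₑ) ∂μ := by
        simp only [setLAverage_eq]
        gcongr ?_ / _
        exact setLIntegral_mono_ae' measurableSet_ball hray
    _ = ENNReal.ofReal R *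
          ∫⁻ s in Ioi (0 : ℝ), ⨍⁻ v in ball (0 : E) R, ‖fderiv ℝ u (x + s • v)‖ₑ ∂μ := by
        simp only [setLAverage_eq, div_eq_mul_inv]
        rw [lintegral_const_mul' _ _ ENNReal.ofReal_ne_top, lintegral_mul_const' _ _
          (ENNReal.inv_ne_top.2 hball0), lintegral_lintegral_swap hmeas.aemeasurable, mul_assoc]
    _ = _ := by
        congr 1
        exact setLIntegral_congr_fun measurableSet_Ioi fun s hs =>
          setLAverage_ball_comp_add_smul μ (fun y => ‖fderiv ℝ u y‖ₑ) x R hs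

lemma measure_ball_div_measure_ball (x y : E) {r s : ℝ} (hr : 0 < r) (hs : 0 < s) :
    μ (ball x r) / μ (ball y s) = ENNReal.ofReal (r / s) ^ finrank ℝ E := by
  rw [Measure.addHaar_ball_of_pos μ x hr, Measure.addHaar_ball_of_pos μ y hs,
    ENNReal.mul_div_mul_right _ _ (measure_ball_pos μ 0 one_pos).ne' measure_ball_lt_top.ne,
    ← ENNReal.ofReal_div_of_pos (pow_pos hs _), ← div_pow, ENNReal.ofReal_pow (by positivity)]

lemma ofReal_le_two_pow_mul_lintegral_Ioi (m : ℕ) {ρ : ℝ} (hρ : 0 < ρ) :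
    ENNReal.ofReal ρ ≤ 2 ^ m * ∫⁻ s in Ioi ρ, ENNReal.ofReal (ρ / s) ^ m :=
  calc ENNReal.ofReal ρ
      = 2 ^ m * ∫⁻ _ in Ioc ρ (2 * ρ), ENNReal.ofReal 2⁻¹ ^ m := by
        rw [setLIntegral_const, Real.volume_Ioc, ← mul_assoc, ← mul_pow, two_mul ρ,
          add_sub_cancel_right, ENNReal.ofReal_inv_of_pos two_pos, ENNReal.ofReal_ofNat,
          ENNReal.mul_inv_cancel two_ne_zero ENNReal.ofNat_ne_top, one_pow, one_mul]
    _ ≤ 2 ^ m * ∫⁻ s in Ioc ρ (2 * ρ), ENNReal.ofReal (ρ / s) ^ m := by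
        gcongr 2 ^ m * ?_
        refine setLIntegral_mono' measurableSet_Ioc fun s hs => ?_
        gcongr
        rw [inv_eq_one_div, div_le_div_iff₀ two_pos (hρ.trans hs.1)]
        linarith [hs.2]
    _ ≤ 2 ^ m * ∫⁻ s in Ioi ρ, ENNReal.ofReal (ρ / s) ^ m := by
        gcongr
        exact Ioc_subset_Ioi_self

lemma measure_inter_ball_div_measure_ball_le (c x : E) {r s : ℝ} (hr : 0 < r) (hs : 0 < s) :
    μ (ball c r ∩ ball x s) / μ (ball x s) ≤ ENNReal.ofReal (r / s) ^ finrank ℝ E := by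
  rw [← measure_ball_div_measure_ball μ c x hr hs]
  gcongr
  exact inter_subset_left

/-- The integrand is at most `1` for `s ≤ r`, and this range costs no more than a multiple of the
rest. -/
lemma lintegral_measure_inter_ball_div_le_lintegral_Ioi (c x : E) {r b : ℝ} (hr : 0 < r)
    (hb : 0 < b) :
    ∫⁻ s in Ioi (0 : ℝ), μ (ball c (r * b) ∩ ball x (s * b)) / μ (ball x (s * b)) ≤
      (1 + 2 ^ finrank ℝ E) * ∫⁻ s in Ioi r, ENNReal.ofReal (r / s) ^ finrank ℝ E := by
  set m := finrank ℝ E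
  set G : ℝ → ℝ≥0∞ := fun s => μ (ball c (r * b) ∩ ball x (s * b)) / μ (ball x (s * b))
  have hG_one (s : ℝ) : G s ≤ 1 :=
    ENNReal.div_le_of_le_mul (by simpa using measure_mono inter_subset_right)
  have hG {s : ℝ} (hs : 0 < s) : G s ≤ ENNReal.ofReal (r / s) ^ m := by
    rw [← mul_div_mul_right r s hb.ne']
    exact measure_inter_ball_div_measure_ball_le μ c x (mul_pos hr hb) (mul_pos hs hb)
  calc ∫⁻ s in Ioi (0 : ℝ), G s
      ≤ (∫⁻ s in Ioc 0 r, G s) + ∫⁻ s in Ioi r, G s := by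
        rw [← Ioc_union_Ioi_eq_Ioi hr.le]
        exact lintegral_union_le _ _ _
    _ ≤ (∫⁻ _ in Ioc 0 r, 1) + ∫⁻ s in Ioi r, ENNReal.ofReal (r / s) ^ m := by
        gcongr ?_ + ?_
        · exact lintegral_mono hG_one
        · exact setLIntegral_mono' measurableSet_Ioi fun s hs => hG (hr.trans hs)
    _ ≤ (1 + 2 ^ m) * ∫⁻ s in Ioi r, ENNReal.ofReal (r / s) ^ m := by
        rw [setLIntegral_one, Real.volume_Ioc, sub_zero, add_comm, add_mul, one_mul]
        gcongr
        exact ofReal_le_two_pow_mul_lintegral_Ioi m hr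

/-- Smearing a unit point mass at `c` over `ball c (r / 2)` changes its potential by a bounded
factor: if `r ≤ dist c x`, the averaging balls meeting `ball c (r / 2)` have radius comparable to
`dist c x`; otherwise the kernel dominates the tail from `r` on. -/
lemma lintegral_measure_inter_ball_div_le_rieszPotential (c x : E) {r : ℝ} (hr : 0 < r) :
    ∫⁻ s in Ioi (0 : ℝ), μ (ball c (r * 2⁻¹) ∩ ball x (s * 2⁻¹)) / μ (ball x (s * 2⁻¹)) ≤
      (1 + 2 ^ finrank ℝ E) * (ENNReal.ofReal r ^ finrank ℝ E *
        rieszPotential (finrank ℝ E) (Measure.dirac c) x) := by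
  set m := finrank ℝ E
  have hkernel {s : ℝ} (hs : 0 < s) (hcs : c ∈ ball x s) : ENNReal.ofReal (r / s) ^ m =
      ENNReal.ofReal r ^ m * (Measure.dirac c (ball x s) / ENNReal.ofReal s ^ m) := by
    rw [Measure.dirac_apply_of_mem hcs, ENNReal.ofReal_div_of_pos hs, one_div, div_eq_mul_inv,
      mul_pow, ENNReal.inv_pow]
  rw [rieszPotential, ← lintegral_const_mul' _ _ (by finiteness)]
  rcases le_or_gt r (dist c x) with hfar | hnear
  · refine le_mul_of_one_le_of_le le_self_add (setLIntegral_mono' measurableSet_Ioi fun s hs => ?_)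
    rcases (ball c (r * 2⁻¹) ∩ ball x (s * 2⁻¹)).eq_empty_or_nonempty with hempty | ⟨y, hyc, hyx⟩
    · simp [hempty]
    · have hcs : c ∈ ball x s := by
        rw [mem_ball] at hyc hyx ⊢
        linarith [dist_triangle_left c x y]
      have hs0 : 0 < s := hs
      rw [← hkernel hs0 hcs, ← mul_div_mul_right r s (by norm_num : (2⁻¹ : ℝ) ≠ 0)]
      exact measure_inter_ball_div_measure_ball_le μ c x (by positivity) (by positivity)
  · refine (lintegral_measure_inter_ball_div_le_lintegral_Ioi μ c x hr (by positivity)).trans ?_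
    gcongr (1 + 2 ^ m) * ?_
    exact (setLIntegral_mono' measurableSet_Ioi fun s hs =>
      (hkernel (hr.trans hs) (hnear.trans hs)).le).trans
      (lintegral_mono_set (Ioi_subset_Ioi hr.le))

lemma enorm_le_tsum_lintegral_measure_inter_ball_div [Nontrivial E] {ι : Type*} [Countable ι]
    (hu : ContDiff ℝ 1 u) (hcs : HasCompactSupport u) {B : ι → Set E}
    (hB : ∀ i, MeasurableSet (B i)) {a : ι → ℝ≥0∞}
    (hdom : ∀ y, ‖fderiv ℝ u y‖ₑ ≤ ∑' i, (B i).indicator (fun _ => a i) y) (x : E) {R : ℝ}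
    (hR : 0 < R) :
    ‖u x‖ₑ ≤ ENNReal.ofReal R *
      ∑' i, a i * ∫⁻ s in Ioi (0 : ℝ), μ (B i ∩ ball x (s * R)) / μ (ball x (s * R)) := by
  have hmeas (i : ι) :
      Measurable fun s : ℝ => μ (B i ∩ ball x (s * R)) / μ (ball x (s * R)) := by
    have hmono {S : Set E} : Monotone fun s : ℝ => μ (S ∩ ball x (s * R)) := fun s t hst =>
      measure_mono (inter_subset_inter_right _ (ball_subset_ball (by gcongr)))
    exact hmono.measurable.div (by simpa using (hmono (S := univ)).measurable)
  have haverage (s : ℝ) : ⨍⁻ y in ball x (s * R), ‖fderiv ℝ u y‖ₑ ∂μ ≤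
      ∑' i, a i * (μ (B i ∩ ball x (s * R)) / μ (ball x (s * R))) := by
    rw [setLAverage_eq]
    refine (ENNReal.div_le_div_right (lintegral_mono hdom) _).trans_eq ?_
    rw [lintegral_tsum fun i => (measurable_const.indicator (hB i)).aemeasurable,
      div_eq_mul_inv, ← ENNReal.tsum_mul_right]
    refine tsum_congr fun i => ?_
    rw [lintegral_indicator_const (hB i), Measure.restrict_apply (hB i), mul_assoc,
      ← div_eq_mul_inv]
  calc ‖u x‖ₑ
      ≤ ENNReal.ofReal R * ∫⁻ s in Ioi (0 : ℝ), ⨍⁻ y in ball x (s * R), ‖fderiv ℝ u y‖ₑ ∂μ :=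
        enorm_le_lintegral_setLAverage_fderiv μ hu hcs x hR
    _ ≤ ENNReal.ofReal R * ∫⁻ s in Ioi (0 : ℝ),
          ∑' i, a i * (μ (B i ∩ ball x (s * R)) / μ (ball x (s * R))) := by
        gcongr with s
        exact haverage s
    _ = _ := by
        rw [lintegral_tsum fun i => ((hmeas i).const_mul _).aemeasurable]
        simp only [lintegral_const_mul _ (hmeas _)]

lemma enorm_le_rieszPotential_of_enorm_fderiv_le [Nontrivial E] {ι : Type*} [Countable ι]
    (hu : ContDiff ℝ 1 u) (hcs : HasCompactSupport u) {c : ι → E} {r : ι → ℝ} (hr : ∀ i, 0 < r i)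
    {a : ι → ℝ≥0∞}
    (hdom : ∀ y, ‖fderiv ℝ u y‖ₑ ≤ ∑' i, (ball (c i) (r i)).indicator (fun _ => a i) y) (x : E) :
    ‖u x‖ₑ ≤ (1 + 2 ^ finrank ℝ E) * 2 ^ finrank ℝ E *
      rieszPotential (finrank ℝ E)
        (atomicMeasure c fun i => a i * ENNReal.ofReal (r i) ^ finrank ℝ E) x := by
  set m := finrank ℝ E
  let μ : Measure E := Measure.addHaar
  calc ‖u x‖ₑ
      ≤ ENNReal.ofReal 2⁻¹ * ∑' i, a i * ∫⁻ s in Ioi (0 : ℝ),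
          μ (ball (c i) (r i) ∩ ball x (s * 2⁻¹)) / μ (ball x (s * 2⁻¹)) :=
        enorm_le_tsum_lintegral_measure_inter_ball_div μ hu hcs (fun _ => measurableSet_ball) hdom x
          (by norm_num)
    _ ≤ 1 * ∑' i, a i * ((1 + 2 ^ m) * (ENNReal.ofReal (2 * r i) ^ m *
          rieszPotential m (Measure.dirac (c i)) x)) := by
        gcongr with i
        · exact ENNReal.ofReal_le_one.2 (by norm_num)
        · have hradius : 2 * r i * 2⁻¹ = r i := by ring
          simpa only [hradius] using
            lintegral_measure_inter_ball_div_le_rieszPotential μ (c i) x (r := 2 * r i)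
              (by linarith [hr i])
    _ = _ := by
        rw [one_mul, rieszPotential_atomicMeasure, ← ENNReal.tsum_mul_left]
        refine tsum_congr fun i => ?_
        rw [ENNReal.ofReal_mul two_pos.le, ENNReal.ofReal_ofNat, mul_pow]
        ring

end Gradient

section Covering

variable {X : Type*} [PseudoMetricSpace X] [MeasurableSpace X] {d : ℕ}

lemma exists_disjoint_balls_covering_setOf_lt_maximalFunction
    [TopologicalSpace.SeparableSpace X] (hd : d ≠ 0) {ν : Measure X} (hν : ν univ ≠ ∞) {σ : ℝ≥0∞}
    (hσ : σ ≠ 0) :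
    ∃ (T : Set X) (s : X → ℝ), T.Countable ∧ T.PairwiseDisjoint (fun b => ball b (s b)) ∧
      {x | σ < maximalFunction d ν x} ⊆ ⋃ b ∈ T, ball b (4 * s b) ∧
      ∀ b ∈ T, 0 < s b ∧ ENNReal.ofReal (s b) ^ d ≤ σ⁻¹ * ν (ball b (s b)) := by
  have hradius (x : X) (hx : x ∈ {x | σ < maximalFunction d ν x}) :
      ∃ s : ℝ, 0 < s ∧ ENNReal.ofReal s ^ d ≤ σ⁻¹ * ν (ball x s) := by
    simp only [maximalFunction, mem_ofPred_eq, lt_iSup_iff] at hx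
    obtain ⟨s, hs, hlt⟩ := hx
    refine ⟨s, hs, ?_⟩
    rw [mul_comm, ← div_eq_mul_inv, ENNReal.le_div_iff_mul_le (.inl hσ) (.inl hlt.ne_top), mul_comm]
    exact ENNReal.mul_le_of_le_div hlt.le
  choose! s hs hmass using hradius
  have hbound : ∀ x ∈ {x | σ < maximalFunction d ν x},
      s x ≤ ((σ⁻¹ * ν univ) ^ (d : ℝ)⁻¹).toReal := by
    intro x hx
    refine (ENNReal.ofReal_le_iff_le_toReal (by finiteness)).1 ?_
    rw [ENNReal.le_rpow_inv_iff (by positivity), ENNReal.rpow_natCast]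
    exact (hmass x hx).trans (by gcongr; exact subset_univ _)
  obtain ⟨T, hT, hdisj, hcov⟩ := Vitali.exists_disjoint_subfamily_covering_enlargement_ball
    _ id s _ hbound 4 (by norm_num)
  refine ⟨T, s, hdisj.countable_of_isOpen (fun _ _ => isOpen_ball)
    fun b hb => ⟨b, mem_ball_self (hs b (hT hb))⟩, hdisj, fun x hx => ?_,
    fun b hb => ⟨hs b (hT hb), hmass b (hT hb)⟩⟩
  obtain ⟨b, hb, hsub⟩ := hcov x hx
  exact mem_biUnion hb (hsub (mem_ball_self (hs x hx)))

end Covering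

section HausdorffContent

open scoped Topology

variable {n : ℕ} {δ : ℝ}

lemma hc_mono_s12 {S T : Set (EuclideanSpace ℝ (Fin n))} (hST : S ⊆ T) : hc n δ S ≤ hc n δ T :=
  iInf_mono fun _ => iInf_mono fun _ => iInf_mono fun _ =>
    iInf_mono' fun hT => ⟨hST.trans hT, le_rfl⟩

/-- A countable cover is completed to a sequence by balls of arbitrarily small total cost. -/
lemma hc_le_tsum (hδ : 0 < δ) {ι : Type*} [Countable ι] {S : Set (EuclideanSpace ℝ (Fin n))}
    (c : ι → EuclideanSpace ℝ (Fin n)) {r : ι → ℝ} (hr : ∀ i, 0 < r i)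
    (hS : S ⊆ ⋃ i, ball (c i) (r i)) :
    hc n δ S ≤ ∑' i, ENNReal.ofReal (r i ^ δ) := by
  refine ENNReal.le_of_forall_pos_le_add fun ε hε _ => ?_
  obtain ⟨η, hη, hsum⟩ := ENNReal.exists_pos_sum_of_countable (ENNReal.coe_pos.2 hε).ne' ℕ
  obtain ⟨_⟩ := nonempty_denumerable (ι ⊕ ℕ)
  let e : ℕ ≃ ι ⊕ ℕ := (Denumerable.eqv (ι ⊕ ℕ)).symm
  let c' : ι ⊕ ℕ → EuclideanSpace ℝ (Fin n) := Sum.elim c fun _ => 0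
  let r' : ι ⊕ ℕ → ℝ := Sum.elim r fun j => (η j : ℝ) ^ δ⁻¹
  have hr' : ∀ i, 0 < r' i := by
    rintro (i | j)
    · exact hr i
    · exact Real.rpow_pos_of_pos (hη j) _
  have hS' : S ⊆ ⋃ j, ball (c' (e j)) (r' (e j)) := by
    intro x hx
    obtain ⟨i, hi⟩ := mem_iUnion.1 (hS hx)
    exact mem_iUnion.2 ⟨e.symm (Sum.inl i), by simpa [c', r'] using hi⟩
  calc hc n δ S
      ≤ ∑' j, ENNReal.ofReal (r' (e j) ^ δ) :=
        iInf₂_le_of_le (c' ∘ e) (r' ∘ e) (iInf₂_le_of_le (fun j => hr' (e j)) hS' le_rfl)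
    _ = ∑' i, ENNReal.ofReal (r' i ^ δ) := e.tsum_eq fun i => ENNReal.ofReal (r' i ^ δ)
    _ = (∑' i, ENNReal.ofReal (r i ^ δ)) + ∑' j, (η j : ℝ≥0∞) := by
        rw [Summable.tsum_sum ENNReal.summable ENNReal.summable]
        congr 2 with j
        simp only [r', Sum.elim_inr]
        rw [Real.rpow_inv_rpow (η j).coe_nonneg hδ.ne', ENNReal.ofReal_coe_nnreal]
    _ ≤ (∑' i, ENNReal.ofReal (r i ^ δ)) + ε := by gcongr

lemma exists_cover_tsum_lt_of_hc_lt {S : Set (EuclideanSpace ℝ (Fin n))} {A : ℝ≥0∞}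
    (h : hc n δ S < A) :
    ∃ (c : ℕ → EuclideanSpace ℝ (Fin n)) (r : ℕ → ℝ), (∀ j, 0 < r j) ∧
      S ⊆ ⋃ j, ball (c j) (r j) ∧ ∑' j, ENNReal.ofReal (r j ^ δ) < A := by
  simpa only [hc, iInf_lt_iff, exists_prop] using h

lemma hc_setOf_lt_maximalFunction_le (hn : n ≠ 0) (hδ : 0 < δ) (hδn : δ ≤ n) {ι : Type*}
    (c : ι → EuclideanSpace ℝ (Fin n)) {w : ι → ℝ≥0∞} (hw : ∑' i, w i ^ (δ / n) ≠ ∞) {σ : ℝ≥0∞}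
    (hσ : σ ≠ 0) :
    hc n δ {x | σ < maximalFunction n (atomicMeasure c w) x} ≤
      4 ^ δ * σ⁻¹ ^ (δ / n) * ∑' i, w i ^ (δ / n) := by
  have hn' : (0 : ℝ) < n := by positivity
  have hp : 0 < δ / n := by positivity
  have hp1 : δ / n ≤ 1 := (div_le_one hn').2 hδn
  set ν := atomicMeasure c w
  have hν : ν univ ≠ ∞ :=
    mt (ENNReal.rpow_eq_top_iff_of_pos hp).2
      (ne_top_of_le_ne_top hw (atomicMeasure_univ_rpow_le hp hp1))
  obtain ⟨T, s, hT, hdisj, hcov, hball⟩ :=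
    exists_disjoint_balls_covering_setOf_lt_maximalFunction hn hν hσ
  have : Countable T := hT.to_subtype
  have hcost (b : T) : ENNReal.ofReal ((4 * s b) ^ δ) ≤
      4 ^ δ * σ⁻¹ ^ (δ / n) * ν (ball b (s b)) ^ (δ / n) := by
    obtain ⟨hs, hmass⟩ := hball b b.2
    calc ENNReal.ofReal ((4 * s b) ^ δ)
        = 4 ^ δ * (ENNReal.ofReal (s b) ^ n) ^ (δ / n) := by
          rw [← ENNReal.rpow_natCast_mul, mul_div_cancel₀ _ hn'.ne',
            ← ENNReal.ofReal_rpow_of_pos (by positivity), ENNReal.ofReal_mul (by norm_num),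
            ENNReal.mul_rpow_of_nonneg _ _ hδ.le, ENNReal.ofReal_ofNat]
      _ ≤ 4 ^ δ * (σ⁻¹ * ν (ball b (s b))) ^ (δ / n) := by gcongr
      _ = _ := by rw [ENNReal.mul_rpow_of_nonneg _ _ hp.le, mul_assoc]
  calc hc n δ {x | σ < maximalFunction n ν x}
      ≤ ∑' b : T, ENNReal.ofReal ((4 * s b) ^ δ) :=
        hc_le_tsum hδ (fun b : T => (b : EuclideanSpace ℝ (Fin n)))
          (fun b => mul_pos four_pos (hball b b.2).1)
          (by simpa only [← biUnion_eq_iUnion T fun b _ => ball b (4 * s b)] using hcov)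
    _ ≤ 4 ^ δ * σ⁻¹ ^ (δ / n) * ∑' b : T, ν (ball b (s b)) ^ (δ / n) := by
        rw [← ENNReal.tsum_mul_left]
        exact ENNReal.tsum_le_tsum hcost
    _ ≤ _ := by
        gcongr
        exact tsum_atomicMeasure_rpow_le hp hp1 (fun _ => measurableSet_ball)
          ((pairwise_subtype_iff_pairwise_set _ _).2 hdisj)

lemma hc_setOf_lt_rieszPotential_rpow_le (hn : 2 ≤ n) (hδ : 0 < δ) (hδn : δ ≤ n) {ι : Type*}
    (c : ι → EuclideanSpace ℝ (Fin n)) {w : ι → ℝ≥0∞} (hw : ∑' i, w i ^ (δ / n) ≠ ∞) {t : ℝ≥0∞}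
    (ht : t ≠ 0) :
    hc n δ {x | t < rieszPotential n (atomicMeasure c w) x} ^ ((n - 1 : ℝ) / δ) ≤
      2 * 4 ^ (n - 1 : ℝ) / t * (∑' i, w i ^ (δ / n)) ^ (n / δ) := by
  have hn2 : (2 : ℝ) ≤ n := by exact_mod_cast hn
  have hn1 : (0 : ℝ) < n - 1 := by linarith
  have hp : 0 < δ / n := by positivity
  set A := ∑' i, w i ^ (δ / n)
  have hexp : 0 < 1 - (n : ℝ)⁻¹ := by
    rw [sub_pos]
    exact inv_lt_one_of_one_lt₀ (by linarith)
  have hmass : atomicMeasure c w univ ^ (n : ℝ)⁻¹ ≤ A ^ δ⁻¹ := by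
    have := ENNReal.rpow_le_rpow
      (atomicMeasure_univ_rpow_le (c := c) (w := w) hp ((div_le_one (by positivity)).2 hδn))
      (inv_nonneg.2 hδ.le)
    rwa [← ENNReal.rpow_mul, div_mul_eq_mul_div, mul_inv_cancel₀ hδ.ne', one_div] at this
  set σ : ℝ≥0∞ := (t / (2 * A ^ δ⁻¹)) ^ (1 - (n : ℝ)⁻¹)⁻¹
  have hD : 2 * A ^ δ⁻¹ ≠ ∞ := by finiteness
  have hσ : σ ≠ 0 := (ENNReal.rpow_pos_of_nonneg (ENNReal.div_pos ht hD) (by positivity)).ne'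
  have hσinv : (σ⁻¹ ^ (δ / n)) ^ ((n - 1 : ℝ) / δ) = 2 * A ^ δ⁻¹ / t := by
    have : δ / n * ((n - 1 : ℝ) / δ) = 1 - (n : ℝ)⁻¹ := by field_simp
    rw [← ENNReal.rpow_mul, this, ENNReal.inv_rpow, ENNReal.rpow_inv_rpow hexp.ne',
      ENNReal.inv_div (.inl hD) (.inr ht)]
  calc hc n δ {x | t < rieszPotential n (atomicMeasure c w) x} ^ ((n - 1 : ℝ) / δ)
      ≤ (4 ^ δ * σ⁻¹ ^ (δ / n) * A) ^ ((n - 1 : ℝ) / δ) := by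
        gcongr
        exact (hc_mono_s12 (setOf_lt_rieszPotential_subset hn hmass)).trans
          (hc_setOf_lt_maximalFunction_le (by lia) hδ hδn c hw hσ)
    _ = 4 ^ (n - 1 : ℝ) * (2 * A ^ δ⁻¹ / t) * A ^ ((n - 1 : ℝ) / δ) := by
        rw [ENNReal.mul_rpow_of_nonneg _ _ (by positivity),
          ENNReal.mul_rpow_of_nonneg _ _ (by positivity), hσinv, ← ENNReal.rpow_mul,
          mul_div_cancel₀ _ hδ.ne']
    _ = 2 * 4 ^ (n - 1 : ℝ) / t * (A ^ δ⁻¹ * A ^ ((n - 1 : ℝ) / δ)) := by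
        simp only [div_eq_mul_inv]
        ring
    _ = _ := by
        rw [← ENNReal.rpow_add_of_nonneg _ _ (by positivity) (by positivity)]
        congr 2
        field_simp
        ring

lemma ofReal_zpow {x : ℝ} (hx : 0 < x) (k : ℤ) :
    ENNReal.ofReal (x ^ k) = ENNReal.ofReal x ^ k := by
  rw [← Real.rpow_intCast, ← ENNReal.ofReal_rpow_of_pos hx, ENNReal.rpow_intCast]

lemma tsum_zpow_mul_le_lintegral {h : ℝ → ℝ≥0∞} (hh : AntitoneOn h (Ioi 0)) :
    ∑' k : ℤ, 2 ^ (k + 1) * h (2 ^ k) ≤ 4 * ∫⁻ t in Ioi (0 : ℝ), h t := by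
  have hmono : Monotone fun k : ℤ => (2 : ℝ) ^ (k - 1) := fun i j hij =>
    zpow_le_zpow_right₀ one_le_two (by simpa using hij)
  have hdisj := hmono.pairwise_disjoint_on_Ioc_succ
  simp only [Int.succ_eq_succ, Int.succ, add_sub_cancel_right] at hdisj
  have hterm (k : ℤ) :
      2 ^ (k + 1) * h (2 ^ k) ≤ 4 * ∫⁻ t in Ioc ((2 : ℝ) ^ (k - 1)) (2 ^ k), h t := by
    have hlen : 4 * ENNReal.ofReal (2 ^ k - 2 ^ (k - 1)) = 2 ^ (k + 1) := by
      have : (2 : ℝ) ^ (k + 1) = 4 * (2 ^ k - 2 ^ (k - 1)) := by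
        rw [zpow_sub_one₀ two_ne_zero, zpow_add_one₀ two_ne_zero]
        ring
      rw [← ENNReal.ofReal_ofNat 4, ← ENNReal.ofReal_mul (by norm_num), ← this,
        ofReal_zpow two_pos, ENNReal.ofReal_ofNat]
    calc 2 ^ (k + 1) * h (2 ^ k)
        = 4 * ∫⁻ _ in Ioc ((2 : ℝ) ^ (k - 1)) (2 ^ k), h (2 ^ k) := by
          rw [setLIntegral_const, Real.volume_Ioc, mul_left_comm, hlen, mul_comm]
      _ ≤ 4 * ∫⁻ t in Ioc ((2 : ℝ) ^ (k - 1)) (2 ^ k), h t := by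
          gcongr 4 * ?_
          exact setLIntegral_mono' measurableSet_Ioc fun t ht =>
            hh ((_root_.zpow_pos two_pos _).trans ht.1) (mem_Ioi.2 (by positivity)) ht.2
  calc ∑' k : ℤ, 2 ^ (k + 1) * h (2 ^ k)
      ≤ ∑' k : ℤ, 4 * ∫⁻ t in Ioc ((2 : ℝ) ^ (k - 1)) (2 ^ k), h t := ENNReal.tsum_le_tsum hterm
    _ = 4 * ∫⁻ t in ⋃ k : ℤ, Ioc ((2 : ℝ) ^ (k - 1)) (2 ^ k), h t := by
        rw [ENNReal.tsum_mul_left, lintegral_iUnion (fun _ => measurableSet_Ioc) hdisj]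
    _ ≤ 4 * ∫⁻ t in Ioi (0 : ℝ), h t := by
        gcongr
        exact iUnion_subset fun k t ht => (_root_.zpow_pos two_pos _).trans ht.1

lemma exists_weighted_cover_of_choquet_lt {Ω : Set (EuclideanSpace ℝ (Fin n))}
    {f : EuclideanSpace ℝ (Fin n) → ℝ≥0∞} {A : ℝ≥0∞} (hA : 4 * choquet n δ Ω f < A) :
    ∃ (c : ℤ × ℕ → EuclideanSpace ℝ (Fin n)) (r : ℤ × ℕ → ℝ), (∀ i, 0 < r i) ∧
      (∀ y ∈ Ω, f y ≠ 0 → f y ≠ ∞ → ∃ i, y ∈ ball (c i) (r i) ∧ f y ≤ 2 ^ (i.1 + 1)) ∧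
      ∑' i : ℤ × ℕ, 2 ^ (i.1 + 1) * ENNReal.ofReal (r i ^ δ) < A := by
  set S : ℝ → Set (EuclideanSpace ℝ (Fin n)) := fun t => {x | x ∈ Ω ∧ ENNReal.ofReal t < f x}
  have hS : Antitone fun t => hc n δ (S t) := fun s t hst =>
    hc_mono_s12 fun x hx => ⟨hx.1, (ENNReal.ofReal_le_ofReal hst).trans_lt hx.2⟩
  have hlt : ∑' k : ℤ, 2 ^ (k + 1) * hc n δ (S (2 ^ k)) < A :=
    (tsum_zpow_mul_le_lintegral (hS.antitoneOn _)).trans_lt hA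
  have hpow (k : ℤ) : (2 : ℝ≥0∞) ^ (k + 1) ≠ ∞ := by finiteness
  obtain ⟨η, hη, hηsum⟩ := ENNReal.exists_pos_tsum_mul_lt_of_countable
    (tsub_pos_of_lt hlt).ne' (fun k : ℤ => (2 : ℝ≥0∞) ^ (k + 1)) hpow
  have hfinite (k : ℤ) : hc n δ (S (2 ^ k)) ≠ ∞ := fun h => by
    have := (ENNReal.le_tsum (f := fun k : ℤ => 2 ^ (k + 1) * hc n δ (S (2 ^ k))) k).trans_lt hlt
    simp only [h, ENNReal.mul_top (ENNReal.zpow_pos two_ne_zero ENNReal.ofNat_ne_top _).ne',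
      not_top_lt] at this
  choose c r hr hcov hcost using fun k : ℤ => exists_cover_tsum_lt_of_hc_lt
    (ENNReal.lt_add_right (hfinite k) (ENNReal.coe_pos.2 (hη k)).ne')
  refine ⟨fun i => c i.1 i.2, fun i => r i.1 i.2, fun i => hr _ _, fun y hy hy0 hytop => ?_, ?_⟩
  · obtain ⟨k, hk, hk'⟩ := ENNReal.exists_mem_Ioc_zpow hy0 hytop one_lt_two ENNReal.ofNat_ne_top
    have hyS : y ∈ S (2 ^ k) := ⟨hy, by
      rwa [ofReal_zpow two_pos, ENNReal.ofReal_ofNat]⟩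
    obtain ⟨j, hj⟩ := mem_iUnion.1 (hcov k hyS)
    exact ⟨(k, j), hj, hk'⟩
  · rw [ENNReal.tsum_prod']
    simp only [ENNReal.tsum_mul_left]
    calc ∑' k : ℤ, 2 ^ (k + 1) * ∑' j, ENNReal.ofReal (r k j ^ δ)
        ≤ ∑' k : ℤ, 2 ^ (k + 1) * (hc n δ (S (2 ^ k)) + η k) := by
          gcongr with k
          exact (hcost k).le
      _ = (∑' k : ℤ, 2 ^ (k + 1) * hc n δ (S (2 ^ k))) + ∑' k : ℤ, 2 ^ (k + 1) * (η k : ℝ≥0∞) := by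
          simp only [mul_add, ENNReal.tsum_add]
      _ < A := (ENNReal.add_lt_add_left hlt.ne_top hηsum).trans_eq (add_tsub_cancel_of_le hlt.le)

variable {F : Type*} [NormedAddCommGroup F] [NormedSpace ℝ F] {u : EuclideanSpace ℝ (Fin n) → F}
  {Ω : Set (EuclideanSpace ℝ (Fin n))}

lemma exists_ball_domination_of_choquet_fderiv_lt (hn : n ≠ 0) (hδ : 0 < δ)
    (hsupp : tsupport u ⊆ Ω) {A : ℝ≥0∞}
    (hA : 4 * choquet n δ Ω (fun x => ENNReal.ofReal (‖fderiv ℝ u x‖ ^ (δ / n))) < A) :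
    ∃ (c : ℤ × ℕ → EuclideanSpace ℝ (Fin n)) (r : ℤ × ℕ → ℝ) (a : ℤ × ℕ → ℝ≥0∞),
      (∀ i, 0 < r i) ∧
      (∀ y, ‖fderiv ℝ u y‖ₑ ≤ ∑' i, (ball (c i) (r i)).indicator (fun _ => a i) y) ∧
      ∑' i, (a i * ENNReal.ofReal (r i) ^ n) ^ (δ / n) < A := by
  have hp : 0 < δ / n := by positivity
  obtain ⟨c, r, hr, hcov, hsum⟩ := exists_weighted_cover_of_choquet_lt hA
  refine ⟨c, r, fun i => (2 ^ (i.1 + 1)) ^ (δ / n)⁻¹, hr, fun y => ?_, ?_⟩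
  · rcases eq_or_ne (fderiv ℝ u y) 0 with hy0 | hy0
    · rw [hy0, ← ofReal_norm, norm_zero, ENNReal.ofReal_zero]
      exact zero_le
    have hy : y ∈ Ω := by
      by_contra hy
      exact hy0 (image_eq_zero_of_notMem_tsupport fun h => hy (hsupp (tsupport_fderiv_subset ℝ h)))
    obtain ⟨i, hi, hle⟩ := hcov y hy (by positivity) (by finiteness)
    refine le_trans ?_ (ENNReal.le_tsum i)
    rwa [indicator_of_mem hi, ENNReal.le_rpow_inv_iff hp, ← ofReal_norm,
      ENNReal.ofReal_rpow_of_nonneg (norm_nonneg _) hp.le]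
  · refine (tsum_congr fun i => ?_).trans_lt hsum
    rw [ENNReal.mul_rpow_of_nonneg _ _ hp.le, ENNReal.rpow_inv_rpow hp.ne',
      ← ENNReal.rpow_natCast_mul, mul_div_cancel₀ _ (by positivity),
      ENNReal.ofReal_rpow_of_pos (hr i)]

/-- The constant of the weak-type estimate. It collects the factor `4 ^ (n / δ)` lost in
discretizing the Choquet integral, the factor `(1 + 2 ^ n) * 2 ^ n` between `u` and the Riesz
potential of the discretized gradient, and `2 * 4 ^ (n - 1)` from the weak-type estimate for
potentials. -/
noncomputable def weakTypeConst (n : ℕ) (δ : ℝ) : ℝ≥0∞ :=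
  2 * 4 ^ (n - 1 : ℝ) * ((1 + 2 ^ n) * 2 ^ n) * 4 ^ (n / δ)

lemma weakTypeConst_ne_top (hn : 1 ≤ n) (hδ : 0 < δ) : weakTypeConst n δ ≠ ∞ := by
  have : (0 : ℝ) ≤ n - 1 := sub_nonneg.2 (by exact_mod_cast hn)
  unfold weakTypeConst
  finiteness

lemma hc_setOf_lt_enorm_rpow_le_of_choquet_fderiv_lt (hn : 2 ≤ n) (hδ : 0 < δ) (hδn : δ ≤ n)
    (hu : ContDiff ℝ 1 u) (hcs : HasCompactSupport u) (hsupp : tsupport u ⊆ Ω) {A : ℝ≥0∞}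
    (hA : 4 * choquet n δ Ω (fun x => ENNReal.ofReal (‖fderiv ℝ u x‖ ^ (δ / n))) < A)
    {t : ℝ≥0∞} (ht : t ≠ 0) :
    hc n δ {x | t < ‖u x‖ₑ} ^ ((n - 1 : ℝ) / δ) ≤
      2 * 4 ^ (n - 1 : ℝ) * ((1 + 2 ^ n) * 2 ^ n) / t * A ^ (n / δ) := by
  have hn1 : (0 : ℝ) < n - 1 := sub_pos.2 (by exact_mod_cast hn)
  have : Nontrivial (EuclideanSpace ℝ (Fin n)) := by
    have : Nonempty (Fin n) := ⟨⟨0, by lia⟩⟩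
    infer_instance
  obtain ⟨c, r, a, hr, hdom, hsum⟩ :=
    exists_ball_domination_of_choquet_fderiv_lt (by lia) hδ hsupp hA
  set C : ℝ≥0∞ := (1 + 2 ^ n) * 2 ^ n
  have hC : C ≠ ∞ := by finiteness
  set w : ℤ × ℕ → ℝ≥0∞ := fun i => a i * ENNReal.ofReal (r i) ^ n
  have hsub : {x | t < ‖u x‖ₑ} ⊆ {x | t / C < rieszPotential n (atomicMeasure c w) x} := by
    intro x hx
    have hpot := enorm_le_rieszPotential_of_enorm_fderiv_le hu hcs hr hdom x
    rw [finrank_euclideanSpace_fin, mul_comm] at hpot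
    exact ENNReal.div_lt_of_lt_mul (lt_of_lt_of_le hx hpot)
  calc hc n δ {x | t < ‖u x‖ₑ} ^ ((n - 1 : ℝ) / δ)
      ≤ hc n δ {x | t / C < rieszPotential n (atomicMeasure c w) x} ^ ((n - 1 : ℝ) / δ) := by
        gcongr
        exact hc_mono_s12 hsub
    _ ≤ 2 * 4 ^ (n - 1 : ℝ) / (t / C) * (∑' i, w i ^ (δ / n)) ^ (n / δ) :=
        hc_setOf_lt_rieszPotential_rpow_le hn hδ hδn c hsum.ne_top (ENNReal.div_pos ht hC).ne'
    _ ≤ 2 * 4 ^ (n - 1 : ℝ) / (t / C) * A ^ (n / δ) := by gcongr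
    _ = _ := by
        rw [div_eq_mul_inv _ (t / C), ENNReal.inv_div (.inl hC) (.inr ht), ← mul_div_assoc]

theorem stmt_12_general (hn : 2 ≤ n) (hδ : 0 < δ) (hδn : δ ≤ n) (hu : ContDiff ℝ 1 u)
    (hcs : HasCompactSupport u) (hsupp : tsupport u ⊆ Ω) {t : ℝ} (ht : 0 < t) :
    hc n δ {x | x ∈ Ω ∧ t < ‖u x‖} ^ ((n - 1 : ℝ) / δ) ≤
      weakTypeConst n δ / ENNReal.ofReal t *
        choquet n δ Ω (fun x => ENNReal.ofReal (‖fderiv ℝ u x‖ ^ (δ / n))) ^ (n / δ) := by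
  set K := choquet n δ Ω fun x => ENNReal.ofReal (‖fderiv ℝ u x‖ ^ (δ / n))
  have hn1 : (0 : ℝ) < n - 1 := sub_pos.2 (by exact_mod_cast hn)
  have hq : 0 < n / δ := by positivity
  have ht' : ENNReal.ofReal t ≠ 0 := by positivity
  set C : ℝ≥0∞ := 2 * 4 ^ (n - 1 : ℝ) * ((1 + 2 ^ n) * 2 ^ n)
  have hbound {A : ℝ≥0∞} (hA : 4 * K < A) :
      hc n δ {x | x ∈ Ω ∧ t < ‖u x‖} ^ ((n - 1 : ℝ) / δ) ≤ C / ENNReal.ofReal t * A ^ (n / δ) := by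
    refine le_trans ?_
      (hc_setOf_lt_enorm_rpow_le_of_choquet_fderiv_lt hn hδ hδn hu hcs hsupp hA ht')
    gcongr
    refine hc_mono_s12 fun x hx => ?_
    rw [mem_ofPred_eq, ← ofReal_norm]
    exact (ENNReal.ofReal_lt_ofReal_iff_of_nonneg ht.le).2 hx.2
  have hconst : C / ENNReal.ofReal t * (4 * K) ^ (n / δ) =
      weakTypeConst n δ / ENNReal.ofReal t * K ^ (n / δ) := by
    rw [ENNReal.mul_rpow_of_nonneg _ _ hq.le, weakTypeConst, ← mul_assoc]
    simp only [C, div_eq_mul_inv]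
    ring
  rw [← hconst]
  rcases eq_or_ne K ∞ with hK | hK
  · have hC : C / ENNReal.ofReal t ≠ 0 := by simp [C]
    simp [hK, ENNReal.mul_top, ENNReal.top_rpow_of_pos hq, hC]
  · have : (𝓝[>] (4 * K)).NeBot := nhdsGT_neBot_of_exists_gt ⟨∞, by finiteness⟩
    have hcont : Continuous fun A : ℝ≥0∞ => C / ENNReal.ofReal t * A ^ (n / δ) :=
      (ENNReal.continuous_const_mul (by finiteness)).comp ENNReal.continuous_rpow_const
    exact ge_of_tendsto (hcont.continuousWithinAt (s := Ioi (4 * K)))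
      (Filter.eventually_of_mem self_mem_nhdsWithin fun _ hA => hbound hA)

end HausdorffContent

theorem stmt_12 (n : ℕ) (hn : 2 ≤ n) (δ : ℝ) (hδ : 0 < δ) (hδn : δ ≤ n) :
    ∃ c : ℝ≥0∞, c ≠ ⊤ ∧
      ∀ Ω : Set (EuclideanSpace ℝ (Fin n)), IsOpen Ω → IsConnected Ω →
        Bornology.IsBounded Ω →
        ∀ u : EuclideanSpace ℝ (Fin n) → ℝ, ContDiff ℝ 1 u → HasCompactSupport u →
          tsupport u ⊆ Ω → ∀ t : ℝ, 0 < t →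
            (hc n δ {x | x ∈ Ω ∧ t < |u x|}) ^ ((n - 1 : ℝ) / δ) ≤
              c / ENNReal.ofReal t *
                (choquet n δ Ω (fun x => ENNReal.ofReal (‖fderiv ℝ u x‖ ^ (δ / n)))) ^ ((n : ℝ) / δ) :=
  ⟨weakTypeConst n δ, weakTypeConst_ne_top (by lia) hδ, fun _ _ _ _ _ hu hcs hsupp _ ht =>
    stmt_12_general hn hδ hδn hu hcs hsupp ht⟩
end
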